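/- For all w, u ∈ ℌ̂⁰ one has ζ_q(w)·ζ_q(u) = ζ_q(w *_q u), where *_q is the q-stuffle product. In particular ζ_q: ℌ̂⁰ → ℚ[[q]] is a 𝒞-algebra homomorphism with respect to *_q. -/

import Mathlib

/-!
The truncated sums `Z N ks = ∑_{N ≥ m₁ > ⋯ > m_r > 0} ∏ fac k_j m_j`, with
`fac k m = q^{km}/[m]_q^k`, are finite, and `fac k m * fac l m = fac (k + l) m`.  Splitting off the terms
with largest index `m₁ = N + 1` gives `Z (N+1) (k :: w) = Z N (k :: w) + fac k (N+1) * Z N w`;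
multiplying two such recursions reproduces exactly the three terms of the quasi-shuffle recursion,
so `Z N` is multiplicative for the stuffle product (`Z_mul`, by induction on `N`).

For an admissible word the factor `fac k₁ m₁` is divisible by `q^{m₁}`, so the coefficient of `q^n`
in `Z N ks` does not depend on `N ≥ n` (`coeff_Z_of_le`) and equals the coefficient of `q^n` in
`ζ_q(ks)` (`coeff_zetaQ`).  Comparing coefficients gives the claim for words, since the stuffle
product of admissible words is a sum of admissible words.  The extension to the `𝒞`-span `ℌ̂⁰`
holds because each `c ∈ 𝒞` acts through `ζ_q` as multiplication by a power series (`exists_smul`),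
which for `ℏ⁻¹` uses that `1 - q` is invertible.
-/

/- STATEMENT 5: For all w, u ∈ ℌ̂⁰ one has ζ_q(w)·ζ_q(u) = ζ_q(w *_q u), where *_q
is the q-stuffle product; in particular ζ_q : ℌ̂⁰ → ℚ[[q]] is a 𝒞-algebra
homomorphism with respect to *_q. Here 𝒞 = ℚ[ℏ,ℏ⁻¹] and ℌ̂¹ = 𝒞⟨e₀,e₁,…⟩ is
modelled with alphabet ℕ (letter k ↦ e_k); ℏ acts on ℚ[[q]] as multiplication
by (1-q). -/

noncomputable section

/-- 𝒞 = ℚ[ℏ,ℏ⁻¹], the ring of Laurent polynomials in ℏ over ℚ. -/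
abbrev CC : Type := LaurentPolynomial ℚ

/-- ℏ ∈ 𝒞. -/
def hbar : CC := LaurentPolynomial.T 1

/-- A word e_{k₁}⋯e_{k_r} in the letters e₀,e₁,… as an element of ℌ̂¹ = 𝒞⟨e₀,e₁,…⟩. -/
def ofW (w : List ℕ) : MonoidAlgebra CC (FreeMonoid ℕ) :=
  MonoidAlgebra.of CC (FreeMonoid ℕ) (FreeMonoid.ofList w)

/-- The index list (k₁,…,k_r) is admissible: either empty or k₁ ≥ 1. -/
def Admissible (l : List ℕ) : Prop := ∀ h : l ≠ [], 1 ≤ l.head h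

instance : TopologicalSpace (PowerSeries ℚ) := by
  unfold PowerSeries MvPowerSeries; infer_instance

/-- [m]_q = (1-q^m)/(1-q) = 1 + q + ⋯ + q^{m-1} ∈ ℚ[[q]]. -/
def qnum (m : ℕ) : PowerSeries ℚ := ∑ i ∈ Finset.range m, PowerSeries.X ^ i

/-- The Schlesinger–Zudilin q-multiple zeta value
ζ_q(k₁,…,k_r) = Σ_{m₁>⋯>m_r>0} ∏_j q^{k_j m_j}/[m_j]_q^{k_j} ∈ ℚ[[q]]. -/
def zetaQ (ks : List ℕ) : PowerSeries ℚ :=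
  ∑' m : {m : Fin ks.length → ℕ //
      (∀ i j : Fin ks.length, i < j → m j < m i) ∧ ∀ i, 0 < m i},
    ∏ j : Fin ks.length,
      PowerSeries.X ^ (ks.get j * m.1 j) * ((qnum (m.1 j))⁻¹) ^ ks.get j

/-- ℌ̂⁰ ⊂ ℌ̂¹, the 𝒞-span of 𝟏 and the words e_{k₁}⋯e_{k_r} with k₁ ≥ 1. -/
def H0 : Submodule CC (MonoidAlgebra CC (FreeMonoid ℕ)) :=
  Submodule.span CC {x | ∃ l : List ℕ, Admissible l ∧ x = ofW l}

/-! ### Truncated sums and the stuffle product -/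

/-- The factor `q^{km}/[m]_q^k`. -/
def fac (k m : ℕ) : PowerSeries ℚ := PowerSeries.X ^ (k * m) * ((qnum m)⁻¹) ^ k

lemma fac_mul (k l m : ℕ) : fac k m * fac l m = fac (k + l) m := by
  unfold fac; ring

/-- The truncated sum over `N ≥ m₁ > ⋯ > m_r > 0`; the summation variable `m` below is `m₁ - 1`. -/
def Z : ℕ → List ℕ → PowerSeries ℚ
  | _, [] => 1
  | N, k :: ks => ∑ m ∈ Finset.range N, fac k (m + 1) * Z m ks

lemma Z_nil (N : ℕ) : Z N [] = 1 := by simp [Z]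

lemma Z_zero (k : ℕ) (ks : List ℕ) : Z 0 (k :: ks) = 0 := by simp [Z]

lemma Z_succ (N k : ℕ) (ks : List ℕ) :
    Z (N + 1) (k :: ks) = Z N (k :: ks) + fac k (N + 1) * Z N ks := by
  simp [Z, Finset.sum_range_succ]

/-- The list of words (with multiplicity) whose sum is the stuffle product of two words. -/
def stl : List ℕ → List ℕ → List (List ℕ)
  | [], v => [v]
  | w, [] => [w]
  | k :: w, l :: v =>
    (stl w (l :: v)).map (k :: ·) ++ (stl (k :: w) v).map (l :: ·) ++
      (stl w v).map ((k + l) :: ·)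
termination_by w v => w.length + v.length

lemma stl_nil_left (v : List ℕ) : stl [] v = [v] := by
  cases v <;> simp [stl]

lemma stl_nil_right (w : List ℕ) : stl w [] = [w] := by
  cases w <;> simp [stl]

lemma stl_cons (k l : ℕ) (w v : List ℕ) : stl (k :: w) (l :: v) =
    (stl w (l :: v)).map (k :: ·) ++ (stl (k :: w) v).map (l :: ·) ++
      (stl w v).map ((k + l) :: ·) := by
  rw [stl]

lemma sum_Z_zero (k : ℕ) (L : List (List ℕ)) :
    ((L.map (k :: ·)).map (Z 0)).sum = 0 := by
  induction L with
  | nil => rfl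
  | cons a L ih => simp only [List.map_cons, List.sum_cons, ih, Z_zero, add_zero]

lemma sum_Z_succ (N k : ℕ) (L : List (List ℕ)) :
    ((L.map (k :: ·)).map (Z (N + 1))).sum =
      ((L.map (k :: ·)).map (Z N)).sum + fac k (N + 1) * (L.map (Z N)).sum := by
  induction L with
  | nil => simp
  | cons a L ih =>
    simp only [List.map_cons, List.sum_cons, ih, Z_succ]
    ring

/-- Truncated sums are multiplicative for the stuffle product. -/
lemma Z_mul (N : ℕ) (w v : List ℕ) : Z N w * Z N v = ((stl w v).map (Z N)).sum := by
  induction N generalizing w v with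
  | zero =>
    rcases w with _ | ⟨k, w⟩
    · simp [stl_nil_left, Z_nil]
    rcases v with _ | ⟨l, v⟩
    · simp [stl_nil_right, Z_nil]
    rw [stl_cons, List.map_append, List.map_append, List.sum_append, List.sum_append,
      sum_Z_zero, sum_Z_zero, sum_Z_zero, Z_zero]
    simp
  | succ N ih =>
    rcases w with _ | ⟨k, w⟩
    · simp [stl_nil_left, Z_nil]
    rcases v with _ | ⟨l, v⟩
    · simp [stl_nil_right, Z_nil]
    have h := ih (k :: w) (l :: v)
    rw [stl_cons, List.map_append, List.map_append, List.sum_append, List.sum_append] at h ⊢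
    rw [sum_Z_succ, sum_Z_succ, sum_Z_succ, ← ih, ← ih, ← ih, Z_succ, Z_succ, ← fac_mul]
    linear_combination h

lemma admissible_cons (k : ℕ) (w : List ℕ) : Admissible (k :: w) ↔ 1 ≤ k := by
  simp [Admissible]

lemma admissible_stl (w v : List ℕ) (hw : Admissible w) (hv : Admissible v) :
    ∀ x ∈ stl w v, Admissible x := by
  rcases w with _ | ⟨k, w⟩
  · simpa [stl_nil_left] using hv
  rcases v with _ | ⟨l, v⟩
  · simpa [stl_nil_right] using hw
  rw [admissible_cons] at hw hv
  intro x hx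
  simp only [stl_cons, List.mem_append, List.mem_map] at hx
  rcases hx with (⟨y, -, rfl⟩ | ⟨y, -, rfl⟩) | ⟨y, -, rfl⟩ <;> rw [admissible_cons] <;> omega

/-! ### Coefficients of the full series -/

lemma coeff_fac_mul (k m n : ℕ) (hk : 1 ≤ k) (h : n < m) (P : PowerSeries ℚ) :
    PowerSeries.coeff n (fac k m * P) = 0 := by
  have hd : PowerSeries.X ^ m ∣ fac k m * P := by
    unfold fac
    rw [mul_assoc]
    exact Dvd.dvd.mul_right (pow_dvd_pow _ (Nat.le_mul_of_pos_left m hk)) _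
  exact PowerSeries.X_pow_dvd_iff.1 hd n h

/-- The coefficient of `q^n` in the truncated sums is stable from `N = n` on. -/
lemma coeff_Z_of_le (l : List ℕ) (hl : Admissible l) (n N : ℕ) (h : n ≤ N) :
    PowerSeries.coeff n (Z N l) = PowerSeries.coeff n (Z n l) := by
  rcases l with _ | ⟨k, l⟩
  · simp [Z_nil]
  rw [admissible_cons] at hl
  induction N, h using Nat.le_induction with
  | base => rfl
  | succ N hN ih =>
    rw [Z_succ, map_add, ih, coeff_fac_mul k (N + 1) n hl (by omega), add_zero]

/-- Strictly decreasing tuples with entries in `{1, …, N}`. -/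
def S (N r : ℕ) : Finset (Fin r → ℕ) :=
  (Fintype.piFinset fun _ => Finset.Icc 1 N).filter fun m => ∀ i j, i < j → m j < m i

lemma mem_S (N r : ℕ) (m : Fin r → ℕ) :
    m ∈ S N r ↔ (∀ i, 1 ≤ m i ∧ m i ≤ N) ∧ ∀ i j, i < j → m j < m i := by
  simp [S]

lemma cons_mem_S (N r a : ℕ) (m : Fin r → ℕ) :
    (Fin.cons a m : Fin (r + 1) → ℕ) ∈ S N (r + 1) ↔ 1 ≤ a ∧ a ≤ N ∧ m ∈ S (a - 1) r := by
  simp only [mem_S, Fin.forall_fin_succ, Fin.cons_zero, Fin.cons_succ, Fin.succ_lt_succ_iff,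
    Fin.succ_pos, Fin.not_lt_zero, false_imp_iff, true_imp_iff, true_and]
  constructor
  · rintro ⟨⟨⟨h1, h2⟩, h3⟩, h4, h5⟩
    exact ⟨h1, h2, fun i => ⟨(h3 i).1, by have := h4 i; omega⟩, h5⟩
  · rintro ⟨h1, h2, h3, h5⟩
    exact ⟨⟨⟨h1, h2⟩, fun i => ⟨(h3 i).1, by have := h3 i; omega⟩⟩,
      fun i => by have := h3 i; omega, h5⟩

/-- The recursive truncated sum as a single sum over strictly decreasing tuples. -/
lemma sum_S (ks : List ℕ) (N : ℕ) :
    ∑ m ∈ S N ks.length, ∏ j : Fin ks.length, fac (ks.get j) (m j) = Z N ks := by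
  induction ks generalizing N with
  | nil =>
    have : S N ([] : List ℕ).length = {Fin.elim0} := by
      ext m
      simp only [mem_S, Finset.mem_singleton]
      exact ⟨fun _ => funext fun i => i.elim0, fun _ => ⟨fun i => i.elim0, fun i => i.elim0⟩⟩
    rw [this, Z_nil]
    simp
  | cons k ks ih =>
    simp only [Z, ← ih, Finset.mul_sum]
    rw [Finset.sum_sigma']
    symm
    refine Finset.sum_bij' (fun x _ => (Fin.cons (x.1 + 1) x.2 : Fin (ks.length + 1) → ℕ))
      (fun m _ => ⟨m 0 - 1, Fin.tail m⟩) ?_ ?_ ?_ ?_ ?_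
    · rintro ⟨a, m⟩ h
      simp only [Finset.mem_sigma, Finset.mem_range] at h
      have h1 := h.1
      exact (cons_mem_S N _ _ _).2 ⟨Nat.le_add_left 1 a, h1, by simpa using h.2⟩
    · intro m h
      change m ∈ S N (ks.length + 1) at h
      rw [← Fin.cons_self_tail m, cons_mem_S] at h
      simp only [Finset.mem_sigma, Finset.mem_range]
      exact ⟨by omega, h.2.2⟩
    · rintro ⟨a, m⟩ h
      simp
    · intro m h
      change m ∈ S N (ks.length + 1) at h
      rw [← Fin.cons_self_tail m, cons_mem_S] at h
      have : m 0 - 1 + 1 = m 0 := by omega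
      simp only [this]
      exact Fin.cons_self_tail m
    · rintro ⟨a, m⟩ h
      exact (Fin.prod_univ_succ (n := ks.length) fun j =>
        fac ((k :: ks).get j) ((Fin.cons (a + 1) m : Fin (ks.length + 1) → ℕ) j)).symm

lemma hasSum_subtype_of_finset {α : Type} (P : α → Prop) (F : α → ℚ) (s : Finset α)
    (h : ∀ x ∈ s, P x) (h0 : ∀ x, P x → x ∉ s → F x = 0) :
    HasSum (fun x : Subtype P => F x) (∑ x ∈ s, F x) := by
  classical
  rw [← Finset.sum_subtype_of_mem F h]
  exact hasSum_sum_of_ne_finset_zero fun x hx => h0 x x.2 (by simpa using hx)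

/-- The coefficient of `q^n` in the series defining `zetaQ` only receives contributions from the
finitely many tuples with `m₁ ≤ n`. -/
lemma coeff_zetaQ (l : List ℕ) (hl : Admissible l) (n : ℕ) :
    PowerSeries.coeff n (zetaQ l) = PowerSeries.coeff n (Z n l) := by
  let P : (Fin l.length → ℕ) → Prop := fun m =>
    (∀ i j : Fin l.length, i < j → m j < m i) ∧ ∀ i, 0 < m i
  let T : Subtype P → PowerSeries ℚ := fun m => ∏ j : Fin l.length, fac (l.get j) (m.1 j)
  have key : ∀ n, HasSum (fun m => PowerSeries.coeff n (T m)) (PowerSeries.coeff n (Z n l)) := by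
    intro n
    have hmem : ∀ m ∈ S n l.length, P m := fun m hm =>
      ⟨((mem_S _ _ _).1 hm).2, fun i => (((mem_S _ _ _).1 hm).1 i).1⟩
    rw [← sum_S, map_sum]
    refine hasSum_subtype_of_finset P (fun m => PowerSeries.coeff n
      (∏ j : Fin l.length, fac (l.get j) (m j))) _ hmem ?_
    intro m hm hnot
    rw [mem_S] at hnot
    rcases l with _ | ⟨k, l⟩
    · exact absurd ⟨fun i => i.elim0, fun i => i.elim0⟩ hnot
    rw [admissible_cons] at hl
    -- outside `S n` the largest index `m 0` exceeds `n`
    have h0 : n < m (0 : Fin (l.length + 1)) := by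
      by_contra hle
      refine hnot ⟨fun i => ⟨hm.2 i, ?_⟩, hm.1⟩
      rcases Fin.eq_zero_or_eq_succ (n := l.length) i with rfl | ⟨j, rfl⟩
      · omega
      · have := hm.1 (0 : Fin (l.length + 1)) (Fin.succ j) (Fin.succ_pos j)
        omega
    have hp := Fin.prod_univ_succ (n := l.length) fun j => fac ((k :: l).get j) (m j)
    change PowerSeries.coeff n
      (∏ j : Fin (l.length + 1), fac ((k :: l).get j) (m j)) = 0
    rw [hp]
    exact coeff_fac_mul k _ n hl h0 _
  -- the topology on power series is the product topology over the coefficients, and each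
  -- coefficient family has finite support, so the usual topology on `ℚ` plays no role
  have hT : HasSum T (PowerSeries.mk fun n => PowerSeries.coeff n (Z n l)) := by
    refine (Pi.hasSum (f := (T : Subtype P → (Unit →₀ ℕ) → ℚ))).2 fun d => ?_
    obtain ⟨n, rfl⟩ : ∃ n : ℕ, d = Finsupp.single () n := ⟨d (), by ext; simp⟩
    have h2 : PowerSeries.coeff n (PowerSeries.mk fun n => PowerSeries.coeff n (Z n l)) =
      PowerSeries.coeff n (Z n l) := PowerSeries.coeff_mk _ _
    have h1 := key n
    rw [← h2] at h1
    exact h1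
  have : T2Space (PowerSeries ℚ) :=
    inferInstanceAs (T2Space ((Unit →₀ ℕ) → ℚ))
  have hz : zetaQ l = PowerSeries.mk fun n => PowerSeries.coeff n (Z n l) := hT.tsum_eq
  rw [hz, PowerSeries.coeff_mk]

/-- The stuffle identity for admissible words. -/
lemma zetaQ_mul (w v : List ℕ) (hw : Admissible w) (hv : Admissible v) :
    zetaQ w * zetaQ v = ((stl w v).map zetaQ).sum := by
  ext n
  have h1 : PowerSeries.coeff n (zetaQ w * zetaQ v) = PowerSeries.coeff n (Z n w * Z n v) := by
    rw [PowerSeries.coeff_mul, PowerSeries.coeff_mul]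
    refine Finset.sum_congr rfl fun p hp => ?_
    replace hp : p.1 + p.2 = n := by simpa using hp
    rw [coeff_zetaQ w hw, coeff_zetaQ v hv, ← coeff_Z_of_le w hw p.1 n (by omega),
      ← coeff_Z_of_le v hv p.2 n (by omega)]
  rw [h1, Z_mul, map_list_sum, map_list_sum, List.map_map, List.map_map]
  congr 1
  refine List.map_congr_left fun x hx => ?_
  exact (coeff_zetaQ x (admissible_stl w v hw hv x hx) n).symm

/-! ### Words and scalars in the noncommutative algebra -/

lemma ofW_nil : ofW [] = 1 := map_one (MonoidAlgebra.of CC (FreeMonoid ℕ))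

lemma ofW_cons (k : ℕ) (w : List ℕ) : ofW (k :: w) = ofW [k] * ofW w :=
  map_mul (MonoidAlgebra.of CC (FreeMonoid ℕ)) (FreeMonoid.ofList [k]) (FreeMonoid.ofList w)

lemma sum_ofW_cons (k : ℕ) (L : List (List ℕ)) :
    ((L.map (k :: ·)).map ofW).sum = ofW [k] * (L.map ofW).sum := by
  induction L with
  | nil => simp
  | cons a L ih => simp only [List.map_cons, List.sum_cons, ih, mul_add, ← ofW_cons]

/-- Each `c ∈ 𝒞` acts through `ζ_q` as multiplication by a power series. -/
lemma exists_smul (zetaq : MonoidAlgebra CC (FreeMonoid ℕ) →ₗ[ℚ] PowerSeries ℚ)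
    (h : ∀ x, zetaq (hbar • x) = (1 - PowerSeries.X) * zetaq x) (c : CC) :
    ∃ p : PowerSeries ℚ, ∀ x, zetaq (c • x) = p * zetaq x := by
  have hX : (1 - PowerSeries.X : PowerSeries ℚ) * (1 - PowerSeries.X)⁻¹ = 1 :=
    PowerSeries.mul_inv_cancel _ (by simp)
  have hC : ∀ a : ℚ, ∀ x, zetaq ((LaurentPolynomial.C a : CC) • x) =
      PowerSeries.C a * zetaq x := by
    intro a x
    have : (LaurentPolynomial.C a : CC) • x = a • x := by
      exact algebraMap_smul CC a x
    rw [this, map_smul, PowerSeries.smul_eq_C_mul]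
  have hinv : ∀ x, zetaq ((LaurentPolynomial.T (-1) : CC) • x) =
      (1 - PowerSeries.X)⁻¹ * zetaq x := by
    intro x
    have h1 := h ((LaurentPolynomial.T (-1) : CC) • x)
    have h2 : hbar * LaurentPolynomial.T (-1) = (1 : CC) := by
      rw [hbar, ← LaurentPolynomial.T_add]; simp
    rw [smul_smul, h2, one_smul] at h1
    rw [h1, ← mul_assoc, mul_comm _ (1 - PowerSeries.X), hX, one_mul]
  induction c using LaurentPolynomial.induction_on with
  | h_C a => exact ⟨_, hC a⟩
  | h_add hp hq =>
    obtain ⟨p, hp⟩ := hp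
    obtain ⟨q, hq⟩ := hq
    exact ⟨p + q, fun x => by rw [add_smul, map_add, hp, hq, add_mul]⟩
  | h_C_mul_T n a ih =>
    obtain ⟨p, hp⟩ := ih
    refine ⟨p * (1 - PowerSeries.X), fun x => ?_⟩
    rw [LaurentPolynomial.T_add, ← mul_assoc, mul_smul, hp, ← hbar, h, mul_assoc]
  | h_C_mul_T_Z n a ih =>
    obtain ⟨p, hp⟩ := ih
    refine ⟨p * (1 - PowerSeries.X)⁻¹, fun x => ?_⟩
    rw [sub_eq_add_neg, LaurentPolynomial.T_add, ← mul_assoc, mul_smul, hp, hinv, mul_assoc]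

theorem zetaq_qstuffle_hom
    -- the q-stuffle product *_q : a 𝒞-bilinear product on ℌ̂¹ ...
    (st : MonoidAlgebra CC (FreeMonoid ℕ) →ₗ[CC]
        MonoidAlgebra CC (FreeMonoid ℕ) →ₗ[CC] MonoidAlgebra CC (FreeMonoid ℕ))
    -- ... satisfying 𝟏 *_q x = x *_q 𝟏 = x ...
    (hst_one : ∀ x, st 1 x = x) (hst_one' : ∀ x, st x 1 = x)
    -- ... and e_k w *_q e_l v = e_k(w *_q e_l v) + e_l(e_k w *_q v) + e_{k+l}(w *_q v)
    (hst : ∀ (k l : ℕ) (w v : List ℕ),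
      st (ofW (k :: w)) (ofW (l :: v)) =
        ofW [k] * st (ofW w) (ofW (l :: v))
        + ofW [l] * st (ofW (k :: w)) (ofW v)
        + ofW [k + l] * st (ofW w) (ofW v))
    -- ζ_q : ℌ̂⁰ → ℚ[[q]], the 𝒞-linear map with ζ_q(e_{k₁}⋯e_{k_r}) = ζ_q(k₁,…,k_r),
    -- where 𝒞 acts on ℚ[[q]] via ℏ ↦ (1-q): it is ℚ-linear and ℏ-equivariant
    (zetaq : MonoidAlgebra CC (FreeMonoid ℕ) →ₗ[ℚ] PowerSeries ℚ)
    (hzetaq_hbar : ∀ x, zetaq (hbar • x) = (1 - PowerSeries.X) * zetaq x)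
    (hzetaq : ∀ l : List ℕ, Admissible l → zetaq (ofW l) = zetaQ l) :
    -- conclusion: ζ_q(w)ζ_q(u) = ζ_q(w *_q u) for all w, u ∈ ℌ̂⁰
    ∀ w ∈ H0, ∀ u ∈ H0, zetaq w * zetaq u = zetaq (st w u) := by
  obtain hsm := exists_smul zetaq hzetaq_hbar
  -- the defining recursion determines the given bilinear product on words
  have hw : ∀ w v : List ℕ, st (ofW w) (ofW v) = ((stl w v).map ofW).sum := by
    intro w v
    induction hn : w.length + v.length using Nat.strong_induction_on generalizing w v with
    | _ n ih =>
      rcases w with _ | ⟨k, w⟩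
      · simp [stl_nil_left, ofW_nil, hst_one]
      rcases v with _ | ⟨l, v⟩
      · simp [stl_nil_right, ofW_nil, hst_one']
      simp only [List.length_cons] at hn
      rw [hst, ih _ (by simp only [List.length_cons]; omega) w (l :: v) rfl,
        ih _ (by simp only [List.length_cons]; omega) (k :: w) v rfl,
        ih _ (by omega) w v rfl, stl_cons, List.map_append, List.map_append, List.sum_append,
        List.sum_append, sum_ofW_cons, sum_ofW_cons, sum_ofW_cons]
  intro w hwm u hum
  induction hwm using Submodule.span_induction with
  | zero => simp
  | add x y _ _ hx hy => simp only [map_add, add_mul, LinearMap.add_apply, hx, hy]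
  | smul c x _ hx =>
    obtain ⟨p, hp⟩ := hsm c
    rw [LinearMap.map_smul st, LinearMap.smul_apply, hp, hp, mul_assoc, hx]
  | mem x hx =>
    obtain ⟨l, hl, rfl⟩ := hx
    induction hum using Submodule.span_induction with
    | zero => simp
    | add x y _ _ hx hy => simp only [map_add, mul_add, hx, hy]
    | smul c x _ hx =>
      obtain ⟨p, hp⟩ := hsm c
      rw [LinearMap.map_smul (st (ofW l)), hp, hp, mul_left_comm, hx]
    | mem x hx =>
      obtain ⟨v, hv, rfl⟩ := hx
      rw [hw, hzetaq l hl, hzetaq v hv, zetaQ_mul l v hl hv, map_list_sum, List.map_map]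
      congr 1
      exact List.map_congr_left fun y hy => (hzetaq y (admissible_stl l v hl hv y hy)).symm
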